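/- arXiv:1012.4257 — 5 statements merged into one kernel-verified Lean document; each statement's English description precedes it below -/
import Mathlib

section
/- Fix positive integers m and d. In the polynomial ring ℤ[a₁,…,a_d], with the conventions a₀ = 1 and a_i = 0 for i < 0 or i > d, define d_r := det((a_{1+j−i})_{1≤i,j≤r}) for r ≥ 1. Then the quotient of ℤ[a₁,…,a_d] by the ideal generated by the elements d_r for m+1 ≤ r ≤ m+d is a free ℤ-module of rank binom(m+d, d). -/
/-- The sequence `a₀ = 1, a₁, …, a_d` (and `0` otherwise) in `ℤ[a₁,…,a_d]`, indexed by
integers, with the convention `a_k = 0` for `k < 0` or `k > d`. -/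
noncomputable def aseq (d : ℕ) (k : ℤ) : MvPolynomial (Fin d) ℤ :=
  if h : 1 ≤ k ∧ k ≤ d then MvPolynomial.X ⟨(k - 1).toNat, by omega⟩
  else if k = 0 then 1 else 0

/-- `d_r := det((a_{1+j−i})_{1≤i,j≤r})` in `ℤ[a₁,…,a_d]`, with `d₀ = 1`. -/
noncomputable def dr (d r : ℕ) : MvPolynomial (Fin d) ℤ :=
  Matrix.det (Matrix.of fun i j : Fin r => aseq d (1 + ((j : ℕ) : ℤ) - ((i : ℕ) : ℤ)))

/-!
Over any ring, `X ^ d - a₁ X ^ (d - 1) + a₂ X ^ (d - 2) - ⋯` divides `X ^ (m + d)` if and only if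
the power series inverse `∑ d_r T ^ r` of `1 - a₁ T + a₂ T ^ 2 - ⋯` is a polynomial of degree at
most `m`. Multiplying back, this only requires the vanishing of the `d` coefficients
`d_{m+1}, …, d_{m+d}`. The quotient ring therefore represents the monic factors of degree `d` of
`X ^ (m + d)`.

The rank of the ring `F` representing the monic factors of degree `d` of a monic polynomial `p` of
degree `n` over `R` is found by induction on `d`, counting pairs of a factor `f` and a root of `f`
in two ways. Adjoining to `F` a root of its universal factor multiplies the rank by `d`. The result
also represents the monic factors of degree `d - 1` of `p / (X - x)` over the ring `R[x]` obtained
by adjoining a root `x` of `p`, and that ring has rank `n` over `R`.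
-/

open Polynomial

section LinearFactors

variable {R S : Type*} [CommRing R] [CommRing S] {n : ℕ}

/-- The product `(X - x) * f`, as a monic polynomial of formal degree one more than `f`. -/
noncomputable def mulXSubC (f : MonicDegreeEq R n) (x : R) : MonicDegreeEq R (n + 1) :=
  ⟨(X - C x) * f.1, by simp [sub_mul, coeff_X_mul, f.2], fun i hi => by
    obtain ⟨j, rfl⟩ := Nat.exists_eq_add_of_lt hi
    simp only [sub_mul, coeff_sub, coeff_X_mul, coeff_C_mul]
    rw [f.2.2 _ (by omega), f.2.2 _ (by omega), mul_zero, sub_zero]⟩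

/-- The quotient of `f` by `X - x`, as a monic polynomial of formal degree one less than `f`.
The remainder is discarded. -/
noncomputable def divXSubC (f : MonicDegreeEq R (n + 1)) (x : R) : MonicDegreeEq R n :=
  ⟨f.1 /ₘ (X - C x), by
    nontriviality R
    have hdeg : (X - C x).degree ≤ f.1.degree := by
      rw [degree_X_sub_C, f.degree]
      exact_mod_cast Nat.le_add_left 1 n
    refine (MonicDegreeEq.mk (f.1 /ₘ (X - C x)) ?_ ?_).2
    · rw [Monic, leadingCoeff_divByMonic_of_monic (monic_X_sub_C x) hdeg, f.monic]
    · rw [natDegree_divByMonic _ (monic_X_sub_C x), natDegree_X_sub_C, f.natDegree,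
        Nat.add_sub_cancel]⟩

lemma mulXSubC_divXSubC {f : MonicDegreeEq R (n + 1)} {x : R} (hx : f.1.IsRoot x) :
    mulXSubC (divXSubC f x) x = f :=
  Subtype.ext (mul_divByMonic_eq_iff_isRoot.2 hx)

lemma mulXSubC_left_injective (x : R) :
    Function.Injective fun f : MonicDegreeEq R n => mulXSubC f x := fun _ _ h =>
  Subtype.ext ((monic_X_sub_C x).isRegular.left (congrArg Subtype.val h))

lemma map_mulXSubC (f : MonicDegreeEq R n) (x : R) (φ : R →+* S) :
    (mulXSubC f x).map φ = mulXSubC (f.map φ) (φ x) :=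
  Subtype.ext (by simp [mulXSubC])

lemma mulXSubC_dvd_mulXSubC_iff {k : ℕ} {f : MonicDegreeEq R n} {g : MonicDegreeEq R k} {x : R} :
    (mulXSubC f x).1 ∣ (mulXSubC g x).1 ↔ f.1 ∣ g.1 := by
  refine ⟨fun ⟨q, hq⟩ => ⟨q, (monic_X_sub_C x).isRegular.left ?_⟩, mul_dvd_mul_left _⟩
  simpa only [mulXSubC, mul_assoc] using hq

lemma isRoot_mulXSubC (f : MonicDegreeEq R n) (x : R) : (mulXSubC f x).1.IsRoot x := by
  simp [mulXSubC]

/-- The cofactor of `X - root` in `f`, over the ring `AdjoinRoot f` obtained by adjoining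
a root of `f`. -/
noncomputable def rootCofactor (f : MonicDegreeEq R (n + 1)) : MonicDegreeEq (AdjoinRoot f.1) n :=
  divXSubC (f.map (AdjoinRoot.of f.1)) (AdjoinRoot.root f.1)

lemma mulXSubC_rootCofactor (f : MonicDegreeEq R (n + 1)) :
    mulXSubC (rootCofactor f) (AdjoinRoot.root f.1) = f.map (AdjoinRoot.of f.1) :=
  mulXSubC_divXSubC (AdjoinRoot.isRoot_root f.1)

lemma mulXSubC_map_rootCofactor (f : MonicDegreeEq R (n + 1)) (ψ : AdjoinRoot f.1 →+* S) :
    mulXSubC ((rootCofactor f).map ψ) (ψ (AdjoinRoot.root f.1)) =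
      f.map (ψ.comp (AdjoinRoot.of f.1)) := by
  rw [← map_mulXSubC, mulXSubC_rootCofactor]
  exact Subtype.ext (Polynomial.map_map ..)

lemma nonempty_basis_adjoinRoot (f : MonicDegreeEq R n) :
    Nonempty (Module.Basis (Fin n) R (AdjoinRoot f.1)) := by
  cases subsingleton_or_nontrivial R
  · have : Subsingleton (AdjoinRoot f.1) := Module.subsingleton R _
    exact ⟨.ofEquivFun (LinearEquiv.ofSubsingleton _ _)⟩
  · exact ⟨(AdjoinRoot.powerBasisAux' f.monic).reindex (finCongr f.natDegree)⟩

end LinearFactors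

section UniversalFactor

universe u

variable {R F : Type u} [CommRing R] [CommRing F] {m n d : ℕ}

/-- `f` is the universal monic factor of degree `d` of `p`: the ring `F`, with structure map
`i : R →+* F`, represents the functor sending an `R`-algebra `S` to the set of monic factors of
degree `d` of `p` over `S`. Test algebras lie in the universe of `F` and are given by their
structure maps `φ : R →+* S`. -/
structure IsUniversalFactor (i : R →+* F) (p : R[X]) (f : MonicDegreeEq F d) : Prop where
  dvd : f.1 ∣ p.map i
  existsUnique_lift {S : Type u} [CommRing S] (φ : R →+* S) (g : MonicDegreeEq S d)
    (hg : g.1 ∣ p.map φ) : ∃! ψ : F →+* S, ψ.comp i = φ ∧ f.map ψ = g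

namespace IsUniversalFactor

lemma hom_ext {i : R →+* F} {p : R[X]} {f : MonicDegreeEq F d} (h : IsUniversalFactor i p f)
    {S : Type u} [CommRing S] {ψ₁ ψ₂ : F →+* S} (hi : ψ₁.comp i = ψ₂.comp i)
    (hf : f.map ψ₁ = f.map ψ₂) : ψ₁ = ψ₂ := by
  have hdvd : (f.map ψ₂).1 ∣ p.map (ψ₂.comp i) := by
    rw [← Polynomial.map_map]
    exact Polynomial.map_dvd ψ₂ h.dvd
  exact (h.existsUnique_lift _ _ hdvd).unique ⟨hi, hf⟩ ⟨rfl, rfl⟩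

-- Factors `g` of `rootCofactor p` over `S` correspond to factors `(X - x) * g` of `p`, where `x`
-- is the image of the root of `p`; such a factor amounts to a map from `F` together with a root.
theorem adjoinRoot {i : R →+* F} {p : MonicDegreeEq R (n + 1)} {f : MonicDegreeEq F (d + 1)}
    (h : IsUniversalFactor i p.1 f) :
    IsUniversalFactor (AdjoinRoot.map i p.1 f.1 h.dvd) (rootCofactor p).1 (rootCofactor f) := by
  set j := AdjoinRoot.map i p.1 f.1 h.dvd with hj
  have hj_of : j.comp (AdjoinRoot.of p.1) = (AdjoinRoot.of f.1).comp i := by ext; simp [hj]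
  have hj_root : j (AdjoinRoot.root p.1) = AdjoinRoot.root f.1 := by simp [hj]
  refine ⟨?_, fun {S} _ φ g hg => ?_⟩
  · change (rootCofactor f).1 ∣ ((rootCofactor p).map j).1
    rw [← mulXSubC_dvd_mulXSubC_iff (x := AdjoinRoot.root f.1), mulXSubC_rootCofactor, ← hj_root,
      mulXSubC_map_rootCofactor, hj_of]
    simpa only [MonicDegreeEq.map_coe, Polynomial.map_map] using
      Polynomial.map_dvd (AdjoinRoot.of f.1) h.dvd
  · set x := φ (AdjoinRoot.root p.1)
    have hdvd : (mulXSubC g x).1 ∣ p.1.map (φ.comp (AdjoinRoot.of p.1)) := by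
      rw [← MonicDegreeEq.map_coe, ← mulXSubC_map_rootCofactor]
      exact mulXSubC_dvd_mulXSubC_iff.2 hg
    obtain ⟨ψ₀, hψ₀i, hψ₀f⟩ := (h.existsUnique_lift _ _ hdvd).exists
    have hroot : f.1.eval₂ ψ₀ x = 0 := by
      rw [← eval_map, ← MonicDegreeEq.map_coe, hψ₀f]
      exact isRoot_mulXSubC g x
    have hcomp {ψ : AdjoinRoot f.1 →+* S} (hψ : ψ.comp j = φ) :
        (ψ.comp (AdjoinRoot.of f.1)).comp i = φ.comp (AdjoinRoot.of p.1) ∧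
          ψ (AdjoinRoot.root f.1) = x := by
      rw [RingHom.comp_assoc, ← hj_of, ← RingHom.comp_assoc, hψ, ← hj_root, ← RingHom.comp_apply,
        hψ]
      exact ⟨rfl, rfl⟩
    refine ⟨AdjoinRoot.lift ψ₀ x hroot, ⟨?_, ?_⟩, fun ψ ⟨hψj, hψf⟩ => ?_⟩
    · apply AdjoinRoot.ringHom_ext
      · rw [RingHom.comp_assoc, hj_of, ← RingHom.comp_assoc, AdjoinRoot.lift_comp_of, hψ₀i]
      · rw [RingHom.comp_apply, hj_root, AdjoinRoot.lift_root]
    · apply mulXSubC_left_injective x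
      have := mulXSubC_map_rootCofactor f (AdjoinRoot.lift ψ₀ x hroot)
      rwa [AdjoinRoot.lift_comp_of, AdjoinRoot.lift_root, hψ₀f] at this
    · obtain ⟨hψi, hψroot⟩ := hcomp hψj
      apply AdjoinRoot.ringHom_ext
      · rw [AdjoinRoot.lift_comp_of]
        refine h.hom_ext (hψi.trans hψ₀i.symm) ?_
        rw [hψ₀f, ← mulXSubC_map_rootCofactor, hψroot, hψf]
      · rw [hψroot, AdjoinRoot.lift_root]

lemma bijective_of_degree_zero {i : R →+* F} {p : R[X]} {f : MonicDegreeEq F 0}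
    (h : IsUniversalFactor i p f) : Function.Bijective i := by
  have eq_one {S : Type u} [CommRing S] (g : MonicDegreeEq S 0) : g.1 = 1 :=
    eq_one_of_monic_natDegree_zero g.monic (by nontriviality S; exact g.natDegree)
  let one : MonicDegreeEq R 0 := ⟨1, by simp, fun k hk => by simp [coeff_one, hk.ne']⟩
  obtain ⟨ψ, hψ, -⟩ := (h.existsUnique_lift (RingHom.id R) one (one_dvd _)).exists
  have hiψ : i.comp ψ = RingHom.id F := by
    refine h.hom_ext ?_ (Subtype.ext (by rw [eq_one, eq_one]))
    rw [RingHom.comp_assoc, hψ, RingHom.comp_id, RingHom.id_comp]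
  exact Function.bijective_iff_has_inverse.2
    ⟨ψ, RingHom.congr_fun hψ, RingHom.congr_fun hiψ⟩

end IsUniversalFactor

section Rank

variable {A : Type*} [CommRing A]

lemma free_of_free_pi [IsDomain A] [IsPrincipalIdealRing A] {ι M : Type*} [Nonempty ι]
    [AddCommGroup M] [Module A M] [Module.Finite A M] [Module.Free A (ι → M)] :
    Module.Free A M := by
  classical
  let k : ι := Classical.arbitrary ι
  have : Module.Projective A M := .of_split (LinearMap.single A (fun _ => M) k)
    (LinearMap.proj k) (LinearMap.proj_comp_single_same A (fun _ => M) k)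
  infer_instance

lemma nonempty_adjoinRoot_equiv_pi [Algebra A R] (f : MonicDegreeEq R n) :
    Nonempty (AdjoinRoot f.1 ≃ₗ[A] (Fin n → R)) :=
  (nonempty_basis_adjoinRoot f).map fun b => b.equivFun.restrictScalars A

-- The induction hypothesis, applied over `AdjoinRoot p`, shows that `AdjoinRoot f` is free over
-- `A`; since it is isomorphic to `F ^ (d + 1)`, so is its direct summand `F`.
theorem IsUniversalFactor.free_and_finite_and_finrank_eq
    [IsDomain A] [IsPrincipalIdealRing A] [Algebra A R] [Algebra A F] [Module.Free A R]
    [Module.Finite A R] {i : R →ₐ[A] F} {p : MonicDegreeEq R (m + d)} {f : MonicDegreeEq F d}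
    (h : IsUniversalFactor i.toRingHom p.1 f) :
    Module.Free A F ∧ Module.Finite A F ∧
      Module.finrank A F = Module.finrank A R * (m + d).choose d := by
  induction d generalizing R F with
  | zero =>
    let e : R ≃ₗ[A] F := LinearEquiv.ofBijective i.toLinearMap h.bijective_of_degree_zero
    exact ⟨.of_equiv e, .equiv e, by rw [Nat.choose_zero_right, mul_one, e.finrank_eq]⟩
  | succ d ih =>
    obtain ⟨eR⟩ := nonempty_adjoinRoot_equiv_pi (A := A) p
    obtain ⟨eF⟩ := nonempty_adjoinRoot_equiv_pi (A := A) f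
    have : Module.Free A (AdjoinRoot p.1) := .of_equiv eR.symm
    have : Module.Finite A (AdjoinRoot p.1) := .equiv eR.symm
    obtain ⟨_, _, hrank⟩ := ih (i := AdjoinRoot.mapAlgHom i p.1 f.1 h.dvd)
      (p := rootCofactor (n := m + d) p) h.adjoinRoot
    have : Module.Free A (Fin (d + 1) → F) := .of_equiv eF
    have : Module.Finite A (Fin (d + 1) → F) := .equiv eF
    have : Module.Finite A F :=
      .of_surjective (LinearMap.proj (φ := fun _ : Fin (d + 1) => F) 0)
        (LinearMap.proj_surjective 0)
    have : Module.Free A F := free_of_free_pi (ι := Fin (d + 1))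
    refine ⟨this, ‹_›, Nat.eq_of_mul_eq_mul_right d.succ_pos ?_⟩
    calc Module.finrank A F * (d + 1)
        = Module.finrank A (AdjoinRoot f.1) := by
          rw [eF.finrank_eq, Module.finrank_pi_fintype, Finset.sum_const, Finset.card_univ,
            Fintype.card_fin, smul_eq_mul, mul_comm]
      _ = Module.finrank A R * ((m + d + 1) * (m + d).choose d) := by
          rw [hrank, eR.finrank_eq, Module.finrank_pi_fintype, Finset.sum_const, Finset.card_univ,
            Fintype.card_fin, smul_eq_mul]
          ring
      _ = Module.finrank A R * (m + (d + 1)).choose (d + 1) * (d + 1) := by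
          rw [Nat.add_one_mul_choose_eq, mul_assoc, add_assoc]

end Rank

end UniversalFactor

section ToeplitzDeterminant

variable {R : Type*}

/-- The matrix `(a_{1+j-i})` of size `r + 1` with its first row replaced by `v`. This shape,
unlike that of `(a_{1+j-i})` itself, is preserved by deleting the first column and second row. -/
def toeplitzWithFirstRow (a : ℤ → R) (v : ℕ → R) (r : ℕ) :
    Matrix (Fin (r + 1)) (Fin (r + 1)) R :=
  Matrix.of (Matrix.vecCons (fun j => v j) fun i j => a (((j : ℕ) : ℤ) - ((i : ℕ) : ℤ)))

lemma submatrix_toeplitzWithFirstRow_one (a : ℤ → R) (v : ℕ → R) (r : ℕ) :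
    (toeplitzWithFirstRow a v (r + 1)).submatrix (Fin.succAbove (Fin.succ 0)) Fin.succ =
      toeplitzWithFirstRow a (fun j => v (j + 1)) r := by
  ext i j
  cases i using Fin.cases with
  | zero => simp [toeplitzWithFirstRow]
  | succ i => simp [toeplitzWithFirstRow]

variable [CommRing R]

/-- The determinant of the `r × r` matrix `(a_{1+j-i})`. If `a` is the sequence of elementary
symmetric polynomials, this is the complete homogeneous symmetric polynomial of degree `r`. -/
def toeplitzDet (a : ℤ → R) (r : ℕ) : R :=
  (Matrix.of fun i j : Fin r => a (1 + ((j : ℕ) : ℤ) - ((i : ℕ) : ℤ))).det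

lemma det_toeplitzWithFirstRow_self (a : ℤ → R) (r : ℕ) :
    (toeplitzWithFirstRow a (fun j => a (j + 1)) r).det = toeplitzDet a (r + 1) := by
  unfold toeplitzDet
  congr 1
  ext i j
  cases i using Fin.cases with
  | zero => simp [toeplitzWithFirstRow, add_comm]
  | succ i =>
    simp only [toeplitzWithFirstRow, Matrix.of_apply, Matrix.cons_val_succ, Fin.val_succ]
    congr 1
    push_cast
    ring

lemma det_submatrix_toeplitzWithFirstRow_zero (a : ℤ → R) (v : ℕ → R) (r : ℕ) :
    ((toeplitzWithFirstRow a v r).submatrix (Fin.succAbove 0) Fin.succ).det =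
      toeplitzDet a r := by
  unfold toeplitzDet
  congr 1
  ext i j
  simp [toeplitzWithFirstRow, add_comm]

variable {a : ℤ → R}

lemma det_toeplitzWithFirstRow_succ (h0 : a 0 = 1) (hneg : ∀ k < 0, a k = 0) (v : ℕ → R)
    (r : ℕ) :
    (toeplitzWithFirstRow a v (r + 1)).det =
      v 0 * toeplitzDet a (r + 1) - (toeplitzWithFirstRow a (fun j => v (j + 1)) r).det := by
  have entry_zero : toeplitzWithFirstRow a v (r + 1) 0 0 = v 0 := rfl
  have entry_one : toeplitzWithFirstRow a v (r + 1) (Fin.succ 0) 0 = 1 := by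
    simp [toeplitzWithFirstRow, h0]
  have entry_of_two_le (i : Fin r) : toeplitzWithFirstRow a v (r + 1) i.succ.succ 0 = 0 := by
    simpa [toeplitzWithFirstRow] using hneg (-1 + -(i : ℤ)) (by omega)
  rw [Matrix.det_succ_column_zero, Fin.sum_univ_succ, Fin.sum_univ_succ,
    Finset.sum_eq_zero fun i _ => by rw [entry_of_two_le, mul_zero, zero_mul],
    det_submatrix_toeplitzWithFirstRow_zero, submatrix_toeplitzWithFirstRow_one, entry_zero,
    entry_one]
  simp only [Fin.val_zero, Fin.val_succ]
  ring

lemma det_toeplitzWithFirstRow (h0 : a 0 = 1) (hneg : ∀ k < 0, a k = 0) (v : ℕ → R) (r : ℕ) :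
    (toeplitzWithFirstRow a v r).det =
      ∑ j ∈ Finset.range (r + 1), (-1) ^ j * v j * toeplitzDet a (r - j) := by
  induction r generalizing v with
  | zero => simp [toeplitzWithFirstRow, toeplitzDet]
  | succ r ih =>
    rw [det_toeplitzWithFirstRow_succ h0 hneg, ih, Finset.sum_range_succ' _ (r + 1)]
    simp only [Nat.add_sub_add_right, pow_succ, mul_neg_one, neg_mul, Finset.sum_neg_distrib,
      Nat.sub_zero, pow_zero, one_mul]
    ring

theorem mk_neg_one_pow_mul_mul_mk_toeplitzDet (h0 : a 0 = 1) (hneg : ∀ k < 0, a k = 0) :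
    (PowerSeries.mk fun j => (-1) ^ j * a j) * PowerSeries.mk (toeplitzDet a) = 1 := by
  ext r
  rw [PowerSeries.coeff_mul, Finset.Nat.sum_antidiagonal_eq_sum_range_succ_mk]
  simp only [PowerSeries.coeff_mk, PowerSeries.coeff_one]
  cases r with
  | zero => simp [h0, toeplitzDet]
  | succ r =>
    rw [Finset.sum_range_succ', if_neg r.succ_ne_zero]
    simp only [Nat.add_sub_add_right, Nat.sub_zero, pow_zero, one_mul, Nat.cast_zero, h0]
    rw [← det_toeplitzWithFirstRow_self, det_toeplitzWithFirstRow h0 hneg, ← Finset.sum_add_distrib]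
    refine Finset.sum_eq_zero fun j _ => ?_
    push_cast
    ring

end ToeplitzDeterminant

section DivisorsOfXPow

variable {R : Type*} [CommRing R] {d m : ℕ}

lemma natDegree_le_of_monicDegreeEq (f : MonicDegreeEq R d) : f.1.natDegree ≤ d :=
  natDegree_le_iff_coeff_eq_zero.2 f.2.2

lemma dvd_X_pow_iff_exists_reflect_mul_eq_one (f : MonicDegreeEq R d) :
    f.1 ∣ X ^ (m + d) ↔ ∃ g : R[X], g.natDegree ≤ m ∧ f.1.reflect d * g = 1 := by
  have hfd : f.1.natDegree ≤ d := natDegree_le_of_monicDegreeEq f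
  constructor
  · rintro ⟨g, hg⟩
    have hgm : g.natDegree ≤ m := by
      nontriviality R
      rcases eq_or_ne g 0 with rfl | hg0
      · simp
      have := congrArg natDegree hg
      rw [f.monic.natDegree_mul' hg0, natDegree_X_pow, f.natDegree] at this
      omega
    refine ⟨g.reflect m, natDegree_reflect_le.trans (max_le le_rfl hgm), ?_⟩
    rw [← reflect_mul _ _ hfd hgm, ← hg, add_comm m, ← reflect_one, reflect_reflect]
  · rintro ⟨g, hgm, hg⟩
    refine ⟨g.reflect m, ?_⟩
    have := reflect_mul (f.1.reflect d) g (natDegree_reflect_le.trans (max_le le_rfl hfd)) hgm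
    rw [hg, reflect_one, reflect_reflect] at this
    rw [← this, add_comm]

lemma exists_natDegree_le_mul_eq_one_iff_coeff_eq_zero {f : R[X]} {H : PowerSeries R}
    (hfd : f.natDegree ≤ d) (hfH : (f : PowerSeries R) * H = 1) :
    (∃ g : R[X], g.natDegree ≤ m ∧ f * g = 1) ↔
      ∀ r ∈ Set.Icc (m + 1) (m + d), PowerSeries.coeff r H = 0 := by
  constructor
  · rintro ⟨g, hgm, hg⟩ r hr
    have hgH : (g : PowerSeries R) = H :=
      left_inv_eq_right_inv (by rw [mul_comm, ← Polynomial.coe_mul, hg, Polynomial.coe_one]) hfH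
    rw [← hgH, Polynomial.coeff_coe]
    exact coeff_eq_zero_of_natDegree_lt (hgm.trans_lt hr.1)
  · intro hH
    have hdeg : (PowerSeries.trunc (m + 1) H).natDegree ≤ m :=
      Nat.lt_succ_iff.1 (PowerSeries.natDegree_trunc_lt H m)
    refine ⟨PowerSeries.trunc (m + 1) H, hdeg, ?_⟩
    ext s
    rcases le_or_gt s (m + d) with hs | hs
    · have htrunc {r : ℕ} (hr : r ≤ s) :
          (PowerSeries.trunc (m + 1) H).coeff r = PowerSeries.coeff r H := by
        rw [PowerSeries.coeff_trunc]
        split_ifs with h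
        · rfl
        · exact (hH r ⟨by omega, hr.trans hs⟩).symm
      rw [← Polynomial.coeff_coe 1, Polynomial.coe_one, ← hfH, PowerSeries.coeff_mul, coeff_mul]
      refine Finset.sum_congr rfl fun ⟨k, r⟩ hkr => ?_
      have hsum : k + r = s := Finset.HasAntidiagonal.mem_antidiagonal.1 hkr
      rw [htrunc (by omega), Polynomial.coeff_coe]
    · rw [coeff_one, if_neg (by omega)]
      have hmul := natDegree_mul_le (p := f) (q := PowerSeries.trunc (m + 1) H)
      exact coeff_eq_zero_of_natDegree_lt (by omega)

theorem dvd_X_pow_iff_coeff_eq_zero (f : MonicDegreeEq R d) {H : PowerSeries R}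
    (hfH : (f.1.reflect d : PowerSeries R) * H = 1) :
    f.1 ∣ X ^ (m + d) ↔ ∀ r ∈ Set.Icc (m + 1) (m + d), PowerSeries.coeff r H = 0 := by
  have hfd := natDegree_le_of_monicDegreeEq f
  rw [dvd_X_pow_iff_exists_reflect_mul_eq_one, exists_natDegree_le_mul_eq_one_iff_coeff_eq_zero
    (natDegree_reflect_le.trans (max_le le_rfl hfd)) hfH]

end DivisorsOfXPow

section SignedMonic

variable {S : Type*} [CommRing S] {d : ℕ}

lemma aseq_zero (d : ℕ) : aseq d 0 = 1 := by simp [aseq]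

lemma aseq_of_neg {k : ℤ} (hk : k < 0) : aseq d k = 0 := by
  rw [aseq, dif_neg (by omega), if_neg (by omega)]

lemma aseq_of_lt {k : ℤ} (hk : d < k) : aseq d k = 0 := by
  rw [aseq, dif_neg (by omega), if_neg (by omega)]

lemma aseq_succ (i : Fin d) : aseq d ((i : ℕ) + 1) = MvPolynomial.X i := by
  rw [aseq, dif_pos (by omega)]
  congr
  omega

lemma coeff_sum_aseq (d k : ℕ) :
    (∑ j ∈ Finset.range (d + 1), C ((-1) ^ (d - j) * aseq d (d - j)) * X ^ j).coeff k =
      (-1) ^ (d - k) * aseq d (d - k) := by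
  simp only [finsetSum_coeff, coeff_C_mul, coeff_X_pow, mul_ite, mul_one, mul_zero,
    Finset.sum_ite_eq, Finset.mem_range]
  split_ifs with h
  · rfl
  · rw [aseq_of_neg (by omega), mul_zero]

/-- The polynomial `X ^ d - a₁ X ^ (d - 1) + a₂ X ^ (d - 2) - ⋯`, the generic monic polynomial of
degree `d`. The signs make the `aᵢ` the elementary symmetric polynomials of its roots. -/
noncomputable def signedMonic (d : ℕ) : MonicDegreeEq (MvPolynomial (Fin d) ℤ) d :=
  ⟨∑ j ∈ Finset.range (d + 1), C ((-1) ^ (d - j) * aseq d (d - j)) * X ^ j,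
    by rw [coeff_sum_aseq, Nat.sub_self, sub_self, pow_zero, one_mul, aseq_zero],
    fun k hk => by rw [coeff_sum_aseq, aseq_of_neg (by omega), mul_zero]⟩

lemma coeff_signedMonic (d k : ℕ) :
    (signedMonic d).1.coeff k = (-1) ^ (d - k) * aseq d (d - k) :=
  coeff_sum_aseq d k

lemma coeff_signedMonic_rev (i : Fin d) :
    (signedMonic d).1.coeff i.rev = (-1) ^ (i.1 + 1) * MvPolynomial.X i := by
  rw [coeff_signedMonic, ← aseq_succ, Fin.val_rev]
  congr <;> omega

lemma ext_coeff_rev {f g : MonicDegreeEq S d} (h : ∀ i : Fin d, f.1.coeff i.rev = g.1.coeff i.rev) :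
    f = g := by
  ext k
  rcases lt_or_ge k d with hk | hk
  · simpa using h (Fin.rev ⟨k, hk⟩)
  · rw [f.coeff_of_ge k hk, g.coeff_of_ge k hk]

theorem existsUnique_map_signedMonic (g : MonicDegreeEq S d) :
    ∃! θ : MvPolynomial (Fin d) ℤ →+* S, (signedMonic d).map θ = g := by
  have coeff_map_rev (θ : MvPolynomial (Fin d) ℤ →+* S) (i : Fin d) :
      ((signedMonic d).map θ).1.coeff i.rev = (-1) ^ (i.1 + 1) * θ (MvPolynomial.X i) := by
    rw [MonicDegreeEq.map_coe, coeff_map, coeff_signedMonic_rev]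
    simp
  refine ⟨MvPolynomial.eval₂Hom (Int.castRingHom S) fun i => (-1) ^ (i.1 + 1) * g.1.coeff i.rev,
    ext_coeff_rev fun i => ?_, fun θ hθ => ?_⟩
  · rw [coeff_map_rev, MvPolynomial.coe_eval₂Hom, MvPolynomial.eval₂_X, ← mul_assoc, ← mul_pow]
    simp
  · refine MvPolynomial.ringHom_ext' (RingHom.ext_int _ _) fun i => ?_
    rw [MvPolynomial.coe_eval₂Hom, MvPolynomial.eval₂_X, ← show (signedMonic d).map θ = g from hθ,
      coeff_map_rev, ← mul_assoc, ← mul_pow]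
    simp

lemma reflect_signedMonic (d : ℕ) :
    ((signedMonic d).1.reflect d : PowerSeries (MvPolynomial (Fin d) ℤ)) =
      PowerSeries.mk fun j => (-1) ^ j * aseq d j := by
  ext1 j
  rw [Polynomial.coeff_coe, coeff_reflect, PowerSeries.coeff_mk]
  rcases le_or_gt j d with hj | hj
  · rw [revAt_le hj, coeff_signedMonic, Nat.sub_sub_self hj, Nat.cast_sub hj, sub_sub_cancel]
  · rw [revAt_eq_self_of_lt hj, (signedMonic d).2.2 j hj, aseq_of_lt (by omega), mul_zero]

theorem map_signedMonic_dvd_X_pow_iff (m : ℕ) (θ : MvPolynomial (Fin d) ℤ →+* S) :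
    ((signedMonic d).map θ).1 ∣ X ^ (m + d) ↔
      Ideal.span ((fun r => dr d r) '' Set.Icc (m + 1) (m + d)) ≤ RingHom.ker θ := by
  have hmul : (((signedMonic d).map θ).1.reflect d : PowerSeries S) *
      PowerSeries.map θ (PowerSeries.mk (dr d)) = 1 := by
    rw [MonicDegreeEq.map_coe, reflect_map, Polynomial.polynomial_map_coe, reflect_signedMonic,
      ← map_mul]
    exact (congrArg _ (mk_neg_one_pow_mul_mul_mk_toeplitzDet (aseq_zero d)
      fun _ => aseq_of_neg)).trans (map_one _)
  rw [dvd_X_pow_iff_coeff_eq_zero _ hmul, Ideal.span_le, Set.image_subset_iff]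
  simp only [PowerSeries.coeff_map, PowerSeries.coeff_mk]
  rfl

end SignedMonic

theorem isUniversalFactor_signedMonic (m d : ℕ) :
    IsUniversalFactor
      (Int.castRingHom (MvPolynomial (Fin d) ℤ ⧸
        Ideal.span ((fun r => dr d r) '' Set.Icc (m + 1) (m + d))))
      (X ^ (m + d)) ((signedMonic d).map (Ideal.Quotient.mk _)) := by
  set I := Ideal.span ((fun r => dr d r) '' Set.Icc (m + 1) (m + d)) with hI
  refine ⟨?_, fun {S} _ φ g hg => ?_⟩
  · rw [Polynomial.map_pow, map_X, map_signedMonic_dvd_X_pow_iff, ← hI, Ideal.mk_ker]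
  · obtain ⟨θ, hθ, hunique⟩ := existsUnique_map_signedMonic g
    rw [Polynomial.map_pow, map_X, ← hθ, map_signedMonic_dvd_X_pow_iff] at hg
    have hker : ∀ a ∈ I, θ a = 0 := fun a ha => RingHom.mem_ker.1 (hg ha)
    have map_comp_mk (ψ : _ ⧸ I →+* S) : ((signedMonic d).map (Ideal.Quotient.mk I)).map ψ =
        (signedMonic d).map (ψ.comp (Ideal.Quotient.mk I)) :=
      Subtype.ext (Polynomial.map_map ..)
    refine ⟨Ideal.Quotient.lift _ θ hker, ⟨RingHom.ext_int _ _, ?_⟩, fun ψ ⟨_, hψ⟩ => ?_⟩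
    · rw [map_comp_mk, Ideal.Quotient.lift_comp_mk, hθ]
    · apply Ideal.Quotient.ringHom_ext
      rw [Ideal.Quotient.lift_comp_mk]
      exact hunique _ ((map_comp_mk ψ).symm.trans hψ)

/-- The quotient of `ℤ[a₁,…,a_d]` by the ideal generated by `d_r` for `m+1 ≤ r ≤ m+d`
is a free `ℤ`-module of rank `(m+d).choose d`. -/
theorem stmt_1 (m d : ℕ) (hm : 0 < m) (hd : 0 < d) :
    Module.Free ℤ
      (MvPolynomial (Fin d) ℤ ⧸ Ideal.span ((fun r => dr d r) '' Set.Icc (m + 1) (m + d))) ∧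
    Module.finrank ℤ
      (MvPolynomial (Fin d) ℤ ⧸ Ideal.span ((fun r => dr d r) '' Set.Icc (m + 1) (m + d)))
      = (m + d).choose d := by
  obtain ⟨hfree, -, hrank⟩ :=
    IsUniversalFactor.free_and_finite_and_finrank_eq (A := ℤ) (R := ℤ) (i := Algebra.ofId ℤ _)
      (p := MonicDegreeEq.mk (X ^ (m + d)) (monic_X_pow _) (natDegree_X_pow _))
      (isUniversalFactor_signedMonic m d)
  exact ⟨hfree, by rw [hrank, Module.finrank_self, one_mul]⟩
end

section
/- For every integer q ≥ 0, the polynomial δ_{2q+1} is divisible by a₁ in ℤ[a₁,a₂]; that is, there exists a polynomial P_q ∈ ℤ[a₁,a₂] with δ_{2q+1} = a₁ · P_q. -/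
/-- The sequence `a₀ = 1, a₁, a₂` (and `0` otherwise) of coefficients in `ℤ[a₁,a₂]`. -/
noncomputable def aseq2 (k : ℤ) : MvPolynomial (Fin 2) ℤ :=
  if k = 0 then 1
  else if k = 1 then MvPolynomial.X 0
  else if k = 2 then MvPolynomial.X 1
  else 0

/-- `δ_r := det((a_{1+j−i})_{1≤i,j≤r})`, with `δ₀ = 1`. -/
noncomputable def delta (r : ℕ) : MvPolynomial (Fin 2) ℤ :=
  Matrix.det (Matrix.of fun i j : Fin r => aseq2 (1 + ((j : ℕ) : ℤ) - ((i : ℕ) : ℤ)))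

/-! Modulo `a₁`, the sequence `a` vanishes at odd indices, so with rows and columns indexed from `0`
the matrix of `δ_{2q+1}` has a zero block on the `q + 1` even rows and columns. Its side lengths add
up to more than `2q + 1`, so every permutation has a factor in that block and the determinant
vanishes modulo `a₁`. -/

section ZeroBlock

open Finset

theorem exists_mem_perm_apply_mem {n : Type*} [Fintype n] {s t : Finset n}
    (hst : Fintype.card n < #s + #t) (σ : Equiv.Perm n) : ∃ i ∈ s, σ i ∈ t := by
  classical
  obtain ⟨j, hj⟩ := inter_nonempty_of_card_lt_card_add_card
    (subset_univ (s.map σ.toEmbedding)) (subset_univ t) (by rwa [card_map, card_univ])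
  obtain ⟨hjs, hjt⟩ := mem_inter.1 hj
  obtain ⟨i, hi, rfl⟩ := mem_map.1 hjs
  exact ⟨i, hi, hjt⟩

theorem det_mem_of_card_lt_card_add_card {n R : Type*} [Fintype n] [DecidableEq n] [CommRing R]
    {I : Ideal R} {M : Matrix n n R} {s t : Finset n}
    (hst : Fintype.card n < #s + #t) (hM : ∀ i ∈ s, ∀ j ∈ t, M i j ∈ I) : M.det ∈ I := by
  rw [← Matrix.det_transpose, Matrix.det_apply']
  refine I.sum_mem fun σ _ ↦ I.mul_mem_left _ ?_
  obtain ⟨i, hi, hσi⟩ := exists_mem_perm_apply_mem hst σ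
  exact I.prod_mem (mem_univ i) (hM i hi (σ i) hσi)

theorem card_filter_even_fin (n : ℕ) : #{i : Fin n | Even (i : ℕ)} = (n + 1) / 2 := by
  induction n with
  | zero => rfl
  | succ n ih =>
    rw [card_filter, Fin.sum_univ_castSucc]
    simp only [Fin.val_castSucc, Fin.val_last, ← card_filter, ih]
    split_ifs <;> grind

theorem stmt_3_general {R : Type*} [CommRing R] {I : Ideal R} {a : ℤ → R} (q : ℕ)
    (ha : ∀ k, Odd k → a k ∈ I) :
    (Matrix.of fun i j : Fin (2 * q + 1) ↦ a (1 + ((j : ℕ) : ℤ) - ((i : ℕ) : ℤ))).det ∈ I := by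
  let evens : Finset (Fin (2 * q + 1)) := {i | Even (i : ℕ)}
  have even_of_mem {i} (hi : i ∈ evens) : Even ((i : ℕ) : ℤ) :=
    (Int.even_coe_nat _).2 (mem_filter.1 hi).2
  have hcard : Fintype.card (Fin (2 * q + 1)) < #evens + #evens := by
    rw [Fintype.card_fin, card_filter_even_fin]
    omega
  exact det_mem_of_card_lt_card_add_card hcard fun i hi j hj ↦
    ha _ ((odd_one.add_even (even_of_mem hj)).sub_even (even_of_mem hi))

end ZeroBlock

theorem X_dvd_aseq2_of_odd {k : ℤ} (hk : Odd k) : MvPolynomial.X 0 ∣ aseq2 k := by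
  have hk0 : k ≠ 0 := by rintro rfl; simp at hk
  have hk2 : k ≠ 2 := by rintro rfl; exact absurd hk (by decide)
  rw [aseq2, if_neg hk0, if_neg hk2]
  split_ifs
  · exact dvd_rfl
  · exact dvd_zero _

/-- For every `q ≥ 0`, `δ_{2q+1}` is divisible by `a₁` in `ℤ[a₁,a₂]`. -/
theorem stmt_3 (q : ℕ) :
    ∃ P : MvPolynomial (Fin 2) ℤ, delta (2 * q + 1) = MvPolynomial.X 0 * P := by
  exact Ideal.mem_span_singleton.1 <|
    stmt_3_general q fun _ hk ↦ Ideal.mem_span_singleton.2 (X_dvd_aseq2_of_odd hk)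
end

section
/- Let n ≥ 1 and let x₁, x₂ ∈ ℂ. Then h_{2n}(x₁,x₂) = 0 if and only if there exists ζ ∈ ℂ with ζ^{2n+1} = 1, ζ ≠ 1 and x₁ = ζ x₂. -/
/-- The complete homogeneous symmetric function `h_r(y₁,y₂) = ∑_{i=0}^r y₁^i y₂^{r−i}`. -/
def hc {R : Type*} [CommRing R] (r : ℕ) (y₁ y₂ : R) : R :=
  ∑ i ∈ Finset.range (r + 1), y₁ ^ i * y₂ ^ (r - i)

/-!
Away from `y = 0`, homogeneity `h_r(z y, y) = h_r(z, 1) y ^ r` reduces the problem to the zeros of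
`h_r(z, 1) = 1 + z + ⋯ + z ^ r`. Since `h_r(z, 1) (z - 1) = z ^ (r + 1) - 1`, these are the
nontrivial `(r + 1)`-th roots of unity: `z = 1` is excluded because `h_r(1, 1) = r + 1`.
For `y = 0`, both sides say that `x = 0`, as `h_r(x, 0) = x ^ r`.
-/

section CommRing

variable {R : Type*} [CommRing R]

theorem hc_mul_sub (r : ℕ) (x y : R) : hc r x y * (x - y) = x ^ (r + 1) - y ^ (r + 1) :=
  geom_sum₂_mul x y (r + 1)

theorem hc_self (r : ℕ) (x : R) : hc r x x = (r + 1 : ℕ) * x ^ r :=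
  geom_sum₂_self x (r + 1)

theorem hc_zero_right (r : ℕ) (x : R) : hc r x 0 = x ^ r := by
  have lower_terms_vanish : ∀ i ∈ Finset.range r, x ^ i * 0 ^ (r - i) = 0 := fun i hi => by
    rw [zero_pow (Nat.sub_ne_zero_of_lt (Finset.mem_range.mp hi)), mul_zero]
  rw [hc, Finset.sum_range_succ, Finset.sum_eq_zero lower_terms_vanish, Nat.sub_self, pow_zero,
    mul_one, zero_add]

theorem hc_mul_mul (r : ℕ) (x y c : R) : hc r (x * c) (y * c) = hc r x y * c ^ r := by
  rw [hc, hc, Finset.sum_mul]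
  refine Finset.sum_congr rfl fun i hi => ?_
  have hir : i ≤ r := Finset.mem_range_succ_iff.mp hi
  rw [mul_pow, mul_pow, mul_mul_mul_comm, ← pow_add, Nat.add_sub_cancel' hir]

theorem hc_one_right_eq_zero_iff [IsDomain R] {r : ℕ} (hr : ((r + 1 : ℕ) : R) ≠ 0) {z : R} :
    hc r z 1 = 0 ↔ z ^ (r + 1) = 1 ∧ z ≠ 1 := by
  have telescope : hc r z 1 * (z - 1) = z ^ (r + 1) - 1 := by rw [hc_mul_sub, one_pow]
  constructor
  · intro h
    refine ⟨?_, ?_⟩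
    · rwa [h, zero_mul, eq_comm, sub_eq_zero] at telescope
    · rintro rfl
      exact hr (by simpa only [hc_self, one_pow, mul_one] using h)
  · rintro ⟨hz, hz1⟩
    rw [hz, sub_self] at telescope
    exact (mul_eq_zero.mp telescope).resolve_right (sub_ne_zero.mpr hz1)

end CommRing

section Field

variable {K : Type*} [Field K] {r : ℕ}

theorem hc_eq_zero_iff_div_pow_eq_one (hr : ((r + 1 : ℕ) : K) ≠ 0) (x : K) {y : K} (hy : y ≠ 0) :
    hc r x y = 0 ↔ (x / y) ^ (r + 1) = 1 ∧ x / y ≠ 1 := by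
  have dehomogenize : hc r x y = hc r (x / y) 1 * y ^ r := by
    rw [← hc_mul_mul, div_mul_cancel₀ x hy, one_mul]
  rw [dehomogenize, mul_eq_zero_iff_right (pow_ne_zero r hy), hc_one_right_eq_zero_iff hr]

theorem stmt_6_general (hr : ((r + 1 : ℕ) : K) ≠ 0)
    (hroot : ∃ ζ : K, ζ ^ (r + 1) = 1 ∧ ζ ≠ 1) (x₁ x₂ : K) :
    hc r x₁ x₂ = 0 ↔ ∃ ζ : K, ζ ^ (r + 1) = 1 ∧ ζ ≠ 1 ∧ x₁ = ζ * x₂ := by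
  obtain rfl | hx₂ := eq_or_ne x₂ 0
  · obtain ⟨ω, hω, hω1⟩ := hroot
    have hr0 : r ≠ 0 := by
      rintro rfl
      exact hω1 (by simpa only [zero_add, pow_one] using hω)
    rw [hc_zero_right, pow_eq_zero_iff hr0]
    simp only [mul_zero]
    exact ⟨fun hx₁ => ⟨ω, hω, hω1, hx₁⟩, fun ⟨_, _, _, hx₁⟩ => hx₁⟩
  · rw [hc_eq_zero_iff_div_pow_eq_one hr x₁ hx₂]
    simp only [← div_eq_iff hx₂, ← and_assoc, exists_eq_right']

end Field

/-- For `n ≥ 1` and `x₁, x₂ ∈ ℂ`, `h_{2n}(x₁,x₂) = 0` iff `x₁ = ζ x₂` for some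
`(2n+1)`-th root of unity `ζ ≠ 1`. -/
theorem stmt_6 (n : ℕ) (hn : 1 ≤ n) (x₁ x₂ : ℂ) :
    hc (2 * n) x₁ x₂ = 0 ↔ ∃ ζ : ℂ, ζ ^ (2 * n + 1) = 1 ∧ ζ ≠ 1 ∧ x₁ = ζ * x₂ := by
  have primitive := Complex.isPrimitiveRoot_exp (2 * n + 1) (Nat.succ_ne_zero _)
  exact stmt_6_general (Nat.cast_ne_zero.mpr (Nat.succ_ne_zero _))
    ⟨_, primitive.pow_eq_one, primitive.ne_one (by lia)⟩ x₁ x₂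
end

section
/- Let n ≥ 2. Let R := ℤ[x₁,x₂,q]/(h_{2n}(x₁,x₂), h_n(x₁²,x₂²) + q), and let σ be the ring involution of R induced by the automorphism of ℤ[x₁,x₂,q] swapping x₁ and x₂ and fixing q. Then the ring ℤ[a₁,a₂,q]/(δ_{2n}, δ'_{2n+1} + q) is isomorphic to the subring R^σ of σ-invariant elements of R, via the ring homomorphism induced by a₁ ↦ x₁ + x₂, a₂ ↦ x₁x₂, q ↦ q. -/
/-!
The substitution `a₁ ↦ x₁ + x₂`, `a₂ ↦ x₁x₂` makes `B = ℤ[x₁,x₂,q]` a free quadratic extension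
`A ⊕ A x₁` of `A = ℤ[a₁,a₂,q]`, with `x₁² = a₁x₁ - a₂` and conjugation the swap of `x₁` and `x₂`.
It sends `δ_r` to `h_r(x₁,x₂)` and, since `h_{2n+1}(x₁,x₂) = (x₁ + x₂) h_n(x₁²,x₂²)`, it sends
`δ'_{2n+1}` to `h_n(x₁²,x₂²)`. So with `I = (δ_{2n}, δ'_{2n+1} + q)` the ring `R` is `B/IB`, the
quadratic extension `A/I ⊕ (A/I) x₁` of `A/I`. As `s + t x₁` and its conjugate have `x₁`-coordinates
`t` and `-t`, its invariants are `A/I` once `2` is regular modulo `I`. Eliminating `q` identifies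
`A/I` with `ℤ[a₁,a₂]/(δ_{2n})`, so regularity means that the prime `2` does not divide `δ_{2n}`;
indeed `δ_r` takes the value `h_r(1,0) = 1`.
-/

open MvPolynomial

section QuadraticExtension

variable {A B : Type*} [CommRing A] [CommRing B] {a b : A} {I : Ideal A}

theorem mem_map_algebraMap_quadraticAlgebra_iff {z : QuadraticAlgebra A a b} :
    z ∈ I.map (algebraMap A (QuadraticAlgebra A a b)) ↔ z.re ∈ I ∧ z.im ∈ I := by
  constructor
  · intro hz
    rw [← Submodule.restrictScalars_mem A, ← Ideal.smul_top_eq_map] at hz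
    induction hz using Submodule.smul_induction_on' with
    | smul r hr w _ => exact ⟨I.mul_mem_right _ hr, I.mul_mem_right _ hr⟩
    | add v _ w _ hv hw => exact ⟨I.add_mem hv.1 hw.1, I.add_mem hv.2 hw.2⟩
  · rintro ⟨hre, him⟩
    rw [← QuadraticAlgebra.mk_eta z, QuadraticAlgebra.mk_eq_add_smul_omega, Algebra.smul_def]
    exact add_mem (Ideal.mem_map_of_mem _ hre)
      (Ideal.mul_mem_right _ _ (Ideal.mem_map_of_mem _ him))

variable (ψ : B ≃+* QuadraticAlgebra A a b) {φ : A →+* B}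

theorem mem_map_iff_re_mem_and_im_mem
    (hφ : ∀ s, ψ (φ s) = algebraMap A (QuadraticAlgebra A a b) s) {p : B} :
    p ∈ I.map φ ↔ (ψ p).re ∈ I ∧ (ψ p).im ∈ I := by
  have hcomp : (ψ : B →+* QuadraticAlgebra A a b).comp φ = algebraMap A _ := RingHom.ext hφ
  rw [← mem_map_algebraMap_quadraticAlgebra_iff, ← hcomp, ← Ideal.map_map]
  exact (Ideal.apply_mem_of_equiv_iff (f := ψ)).symm

theorem quotientMap_injective_of_quadratic
    (hφ : ∀ s, ψ (φ s) = algebraMap A (QuadraticAlgebra A a b) s) :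
    Function.Injective (Ideal.quotientMap (I.map φ) φ Ideal.le_comap_map) := by
  refine Ideal.quotientMap_injective' fun s hs => ?_
  simpa [hφ] using ((mem_map_iff_re_mem_and_im_mem ψ hφ).1 hs).1

theorem range_quotientMap_eq_eqLocus
    (hφ : ∀ s, ψ (φ s) = algebraMap A (QuadraticAlgebra A a b) s)
    {τ : B → B} (hτ : ∀ p, ψ (τ p) = star (ψ p))
    (hI : ∀ t, 2 * t ∈ I → t ∈ I) (σ : B ⧸ I.map φ →+* B ⧸ I.map φ)
    (hσ : ∀ p, σ (Ideal.Quotient.mk _ p) = Ideal.Quotient.mk _ (τ p)) :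
    (Ideal.quotientMap (I.map φ) φ Ideal.le_comap_map).range = σ.eqLocus (RingHom.id _) := by
  ext z
  obtain ⟨p, rfl⟩ := Ideal.Quotient.mk_surjective z
  constructor
  · rintro ⟨w, hw⟩
    obtain ⟨s, rfl⟩ := Ideal.Quotient.mk_surjective w
    have hτs : τ (φ s) = φ s := ψ.injective (by ext <;> simp [hτ, hφ])
    rw [← hw]
    change σ (Ideal.Quotient.mk _ (φ s)) = Ideal.Quotient.mk _ (φ s)
    rw [hσ, hτs]
  · intro hp
    have hdiff : τ p - p ∈ I.map φ := Ideal.Quotient.eq.1 ((hσ p).symm.trans hp)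
    have him : -(2 * (ψ p).im) ∈ I := by
      convert ((mem_map_iff_re_mem_and_im_mem ψ hφ).1 hdiff).2 using 1
      rw [map_sub, hτ, QuadraticAlgebra.im_sub, QuadraticAlgebra.im_star]
      ring
    refine ⟨Ideal.Quotient.mk I (ψ p).re, Ideal.Quotient.eq.2 ?_⟩
    rw [mem_map_iff_re_mem_and_im_mem ψ hφ]
    simpa [hφ] using hI _ (I.neg_mem_iff.1 him)

end QuadraticExtension

section ElementarySubstitution

variable {R : Type*} [CommRing R]

/-- The substitution `a₁ ↦ x₁ + x₂`, `a₂ ↦ x₁x₂`, `q ↦ q` from `R[a₁,a₂,q]` to `R[x₁,x₂,q]`; in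
both rings the variables are numbered `0, 1, 2`. -/
noncomputable def elementarySubst : MvPolynomial (Fin 3) R →ₐ[R] MvPolynomial (Fin 3) R :=
  aeval ![X 0 + X 1, X 0 * X 1, X 2]

/-- The coordinates of an element of `R[x₁,x₂,q]` in the basis `1, x₁` over `R[a₁,a₂,q]`, as a
homomorphism to the quadratic algebra `R[a₁,a₂,q][ω]` with `ω² = a₁ω - a₂`. -/
noncomputable def quadraticCoords : MvPolynomial (Fin 3) R →ₐ[R]
    QuadraticAlgebra (MvPolynomial (Fin 3) R) (-X 1) (X 0) :=
  aeval ![⟨0, 1⟩, ⟨X 0, -1⟩, ⟨X 2, 0⟩]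

theorem quadraticCoords_C (r : R) : quadraticCoords (C r) = ⟨C r, 0⟩ := aeval_C _ r

theorem quadraticCoords_elementarySubst (p : MvPolynomial (Fin 3) R) :
    quadraticCoords (elementarySubst p) = algebraMap _ _ p := by
  have hcomp : quadraticCoords.comp elementarySubst =
      IsScalarTower.toAlgHom R (MvPolynomial (Fin 3) R)
        (QuadraticAlgebra (MvPolynomial (Fin 3) R) (-X 1) (X 0)) := by
    ext i : 1
    fin_cases i <;> ext <;> simp [quadraticCoords, elementarySubst]
  exact DFunLike.congr_fun hcomp p

theorem elementarySubst_quadraticCoords (p : MvPolynomial (Fin 3) R) :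
    elementarySubst (quadraticCoords p).re + elementarySubst (quadraticCoords p).im * X 0 = p := by
  induction p using MvPolynomial.induction_on with
  | C r => rw [quadraticCoords_C]; simp [elementarySubst]
  | add p q hp hq =>
    simp only [map_add, QuadraticAlgebra.re_add, QuadraticAlgebra.im_add]
    linear_combination hp + hq
  | mul_X p i hp =>
    have hX : elementarySubst (quadraticCoords (X i)).re +
        elementarySubst (quadraticCoords (X i)).im * X 0 = (X i : MvPolynomial (Fin 3) R) := by
      fin_cases i <;> simp [quadraticCoords, elementarySubst]
    have h0 : elementarySubst (X 0 : MvPolynomial (Fin 3) R) = X 0 + X 1 := by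
      simp [elementarySubst]
    have h1 : elementarySubst (X 1 : MvPolynomial (Fin 3) R) = X 0 * X 1 := by
      simp [elementarySubst]
    simp only [map_mul, map_add, map_neg, QuadraticAlgebra.re_mul, QuadraticAlgebra.im_mul, h0, h1]
    linear_combination hp * X i +
      (elementarySubst (quadraticCoords p).re + elementarySubst (quadraticCoords p).im * X 0) * hX

/-- `R[x₁,x₂,q]` is the quadratic algebra `R[a₁,a₂,q][ω]` with `ω² = a₁ω - a₂`, where
`a₁ = x₁ + x₂`, `a₂ = x₁x₂` and `ω = x₁`. -/
noncomputable def quadraticEquiv : MvPolynomial (Fin 3) R ≃ₐ[R]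
    QuadraticAlgebra (MvPolynomial (Fin 3) R) (-X 1) (X 0) :=
  { quadraticCoords with
    invFun z := elementarySubst z.re + elementarySubst z.im * X 0
    left_inv := elementarySubst_quadraticCoords
    right_inv z := by
      change quadraticCoords _ = z
      rw [map_add, map_mul, quadraticCoords_elementarySubst, quadraticCoords_elementarySubst]
      ext <;> simp [quadraticCoords] }

theorem quadraticEquiv_rename_swap (p : MvPolynomial (Fin 3) R) :
    quadraticEquiv (rename (Equiv.swap (0 : Fin 3) 1) p) = star (quadraticEquiv p) := by
  change quadraticCoords _ = star (quadraticCoords _)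
  induction p using MvPolynomial.induction_on with
  | C r => rw [rename_C, quadraticCoords_C]; ext <;> simp
  | add p q hp hq => simp only [map_add, star_add, hp, hq]
  | mul_X p i hp =>
    have h2 : Equiv.swap (0 : Fin 3) 1 2 = 2 := by decide
    have hX : quadraticCoords (rename (Equiv.swap (0 : Fin 3) 1) (X i)) =
        star (quadraticCoords (X i : MvPolynomial (Fin 3) R)) := by
      fin_cases i <;> ext <;> simp [quadraticCoords, h2]
    rw [map_mul, map_mul, map_mul, star_mul', hp, hX]

end ElementarySubstitution

section Elimination

variable {R : Type*} [CommRing R] {k : ℕ}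

/-- The substitution `x_k ↦ -c`, which solves the relation `c + x_k = 0` for the last variable. -/
noncomputable def eliminateLast (c : MvPolynomial (Fin k) R) :
    MvPolynomial (Fin (k + 1)) R →ₐ[R] MvPolynomial (Fin k) R :=
  aeval (Fin.snoc (α := fun _ => MvPolynomial (Fin k) R) X (-c))

theorem eliminateLast_rename_castSucc (c p : MvPolynomial (Fin k) R) :
    eliminateLast c (rename Fin.castSucc p) = p := by
  have hX : Fin.snoc (α := fun _ => MvPolynomial (Fin k) R) X (-c) ∘ Fin.castSucc = X := by
    ext1 i
    simp
  rw [eliminateLast, aeval_rename, hX, aeval_X_left_apply]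

theorem mk_rename_eliminateLast {I : Ideal (MvPolynomial (Fin (k + 1)) R)}
    {c : MvPolynomial (Fin k) R} (hrel : rename Fin.castSucc c + X (Fin.last k) ∈ I)
    (p : MvPolynomial (Fin (k + 1)) R) :
    Ideal.Quotient.mk I (rename Fin.castSucc (eliminateLast c p)) = Ideal.Quotient.mk I p := by
  have hcomp : ((Ideal.Quotient.mkₐ R I).comp (rename Fin.castSucc)).comp (eliminateLast c) =
      Ideal.Quotient.mkₐ R I := by
    ext i : 1
    refine Fin.lastCases ?_ (fun j => by simp [eliminateLast]) i
    have hlast := Ideal.Quotient.eq_zero_iff_mem.2 hrel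
    rw [map_add] at hlast
    simpa [eliminateLast] using (eq_neg_of_add_eq_zero_right hlast).symm
  exact DFunLike.congr_fun hcomp p

theorem mem_span_pair_iff_dvd_eliminateLast {c d : MvPolynomial (Fin k) R}
    {p : MvPolynomial (Fin (k + 1)) R} :
    p ∈ Ideal.span {rename Fin.castSucc d, rename Fin.castSucc c + X (Fin.last k)} ↔
      d ∣ eliminateLast c p := by
  constructor
  · intro hp
    obtain ⟨u, v, rfl⟩ := Ideal.mem_span_pair.1 hp
    have hlast : eliminateLast c (X (Fin.last k)) = -c := by simp [eliminateLast]
    simp [eliminateLast_rename_castSucc, hlast]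
  · rintro ⟨u, hu⟩
    have hrel : rename Fin.castSucc c + X (Fin.last k) ∈
        Ideal.span {rename Fin.castSucc d, rename Fin.castSucc c + X (Fin.last k)} :=
      Ideal.mem_span_pair.2 ⟨0, 1, by ring⟩
    rw [← Ideal.Quotient.eq_zero_iff_mem, ← mk_rename_eliminateLast hrel, hu,
      Ideal.Quotient.eq_zero_iff_mem, map_mul]
    exact Ideal.mul_mem_right _ _ (Ideal.mem_span_pair.2 ⟨1, 0, by ring⟩)

theorem mem_span_pair_of_C_mul_mem [IsDomain R] {π : R} (hπ : Prime π)
    {c d : MvPolynomial (Fin k) R} (hd : ¬ C π ∣ d) {p : MvPolynomial (Fin (k + 1)) R}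
    (hp : C π * p ∈ Ideal.span {rename Fin.castSucc d, rename Fin.castSucc c + X (Fin.last k)}) :
    p ∈ Ideal.span {rename Fin.castSucc d, rename Fin.castSucc c + X (Fin.last k)} := by
  rw [mem_span_pair_iff_dvd_eliminateLast] at hp ⊢
  rw [map_mul, ← algebraMap_eq, AlgHom.commutes, algebraMap_eq] at hp
  exact (((prime_C_iff _).2 hπ).left_dvd_or_dvd_right_of_dvd_mul hp).resolve_left hd

end Elimination

section CompleteHomogeneous

variable {R : Type*} [CommRing R]

theorem hc_zero (x y : R) : hc 0 x y = 1 := by simp [hc]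

theorem hc_succ (r : ℕ) (x y : R) : hc (r + 1) x y = x ^ (r + 1) + y * hc r x y :=
  geom_sum₂_succ_eq x y

theorem hc_add_two (r : ℕ) (x y : R) :
    hc (r + 2) x y = (x + y) * hc (r + 1) x y - x * y * hc r x y := by
  rw [hc_succ (r + 1), hc_succ r]
  ring

theorem hc_two_mul_add_one (n : ℕ) (x y : R) :
    hc (2 * n + 1) x y = (x + y) * hc n (x ^ 2) (y ^ 2) := by
  induction n with
  | zero => simp [hc_succ, hc_zero]
  | succ n ih =>
    rw [Nat.mul_succ, hc_succ, hc_succ, ih, hc_succ n]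
    ring

end CompleteHomogeneous

section ToeplitzDeterminant

/-- The `r × r` Toeplitz matrix `(u_{1+j-i})`, whose determinant is `δ_r` for the sequence
`aseq2`. -/
def toeplitz {α : Type*} (u : ℤ → α) (r : ℕ) : Matrix (Fin r) (Fin r) α :=
  Matrix.of fun i j => u (1 + ((j : ℕ) : ℤ) - ((i : ℕ) : ℤ))

theorem toeplitz_succ_succ {α : Type*} (u : ℤ → α) {r : ℕ} (i j : Fin r) :
    toeplitz u (r + 1) i.succ j.succ = toeplitz u r i j := by
  simp only [toeplitz, Matrix.of_apply, Fin.val_succ]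
  congr 1
  push_cast
  ring

variable {R : Type*} [CommRing R]

theorem det_toeplitz_add_two {u : ℤ → R} (hneg : ∀ k < 0, u k = 0) (hgt : ∀ k > 2, u k = 0)
    (r : ℕ) :
    (toeplitz u (r + 2)).det =
      u 1 * (toeplitz u (r + 1)).det - u 0 * u 2 * (toeplitz u r).det := by
  have hcol (i : Fin r) : toeplitz u (r + 2) i.succ.succ 0 = 0 :=
    hneg _ (by simp only [Fin.val_succ, Fin.val_zero]; omega)
  have hrow (j : Fin r) : toeplitz u (r + 2) 0 j.succ.succ = 0 :=
    hgt _ (by simp only [Fin.val_succ, Fin.val_zero]; omega)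
  have h₀₀ : toeplitz u (r + 2) 0 0 = u 1 := by simp [toeplitz]
  have h₁₀ : toeplitz u (r + 2) 1 0 = u 0 := by simp [toeplitz]
  have h₀₁ : toeplitz u (r + 2) 0 1 = u 2 := by simp [toeplitz]
  have hminor₀ : (toeplitz u (r + 2)).submatrix (Fin.succAbove 0) Fin.succ =
      toeplitz u (r + 1) := by
    ext i j
    exact toeplitz_succ_succ u i j
  have hminor₁ : ((toeplitz u (r + 2)).submatrix (Fin.succAbove 1) Fin.succ).det =
      u 2 * (toeplitz u r).det := by
    have hminor : ((toeplitz u (r + 2)).submatrix (Fin.succAbove 1) Fin.succ).submatrix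
        Fin.succ (Fin.succAbove 0) = toeplitz u r := by
      ext i j
      simp only [Matrix.submatrix_apply, Fin.one_succAbove_succ, Fin.zero_succAbove,
        toeplitz_succ_succ]
    rw [Matrix.det_succ_row_zero, Fin.sum_univ_succ, hminor]
    simp [hrow, h₀₁]
  rw [Matrix.det_succ_column_zero, Fin.sum_univ_succ, Fin.sum_univ_succ, hminor₀,
    Fin.succ_zero_eq_one, hminor₁]
  simp only [hcol, h₀₀, h₁₀, mul_zero, zero_mul, Finset.sum_const_zero, Fin.val_zero, Fin.val_one]
  ring

theorem delta_eq_det_toeplitz (r : ℕ) : delta r = (toeplitz aseq2 r).det := rfl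

theorem delta_add_two (r : ℕ) : delta (r + 2) = X 0 * delta (r + 1) - X 1 * delta r := by
  have hneg : ∀ k < 0, aseq2 k = 0 := fun k hk => by
    rw [aseq2, if_neg (by omega), if_neg (by omega), if_neg (by omega)]
  have hgt : ∀ k > 2, aseq2 k = 0 := fun k hk => by
    rw [aseq2, if_neg (by omega), if_neg (by omega), if_neg (by omega)]
  have h₀ : aseq2 0 = 1 := rfl
  have h₁ : aseq2 1 = X 0 := rfl
  have h₂ : aseq2 2 = X 1 := rfl
  simpa only [delta_eq_det_toeplitz, h₀, h₁, h₂, one_mul] using det_toeplitz_add_two hneg hgt r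

theorem map_delta (f : MvPolynomial (Fin 2) ℤ →+* R) {x y : R} (h₀ : f (X 0) = x + y)
    (h₁ : f (X 1) = x * y) (r : ℕ) : f (delta r) = hc r x y := by
  induction r using Nat.twoStepInduction with
  | zero => simp [delta, hc_zero]
  | one => simp [delta, aseq2, hc_succ, hc_zero, h₀]
  | more r ih₀ ih₁ => simp [delta_add_two, hc_add_two, h₀, h₁, ih₀, ih₁]

theorem not_C_two_dvd_delta (r : ℕ) : ¬ C 2 ∣ delta r := by
  intro h
  have hhc : hc r (1 : ℤ) 0 = 1 := by cases r <;> simp [hc_zero, hc_succ]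
  have hdelta : eval ![1, 0] (delta r) = 1 := by rw [map_delta (x := 1) (y := 0), hhc] <;> simp
  have h2 := map_dvd (eval ![1, 0]) h
  rw [eval_C, hdelta] at h2
  omega

end ToeplitzDeterminant

theorem elementarySubst_delta (r : ℕ) :
    elementarySubst (rename Fin.castSucc (delta r)) = hc r (X 0) (X 1) := by
  apply map_delta ((elementarySubst.comp (rename Fin.castSucc)).toRingHom) <;>
    simp [elementarySubst]

theorem elementarySubst_of_X_mul_eq_delta {n : ℕ} {δ' : MvPolynomial (Fin 2) ℤ}
    (hδ' : X 0 * δ' = delta (2 * n + 1)) :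
    elementarySubst (rename Fin.castSucc δ') = hc n (X 0 ^ 2) (X 1 ^ 2) := by
  have hne : (X 0 + X 1 : MvPolynomial (Fin 3) ℤ) ≠ 0 := fun h => by
    simpa using congrArg (eval ![1, 0, 0]) h
  apply mul_left_cancel₀ hne
  rw [← hc_two_mul_add_one, ← elementarySubst_delta, ← hδ', map_mul, map_mul]
  simp [elementarySubst]

/-- Let `n ≥ 2`, `R := ℤ[x₁,x₂,q]/(h_{2n}(x₁,x₂), h_n(x₁²,x₂²) + q)` and let `σ` be the
ring involution of `R` induced by swapping `x₁` and `x₂` and fixing `q`. Then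
`ℤ[a₁,a₂,q]/(δ_{2n}, δ'_{2n+1} + q)` (where `δ'_{2n+1} = δ_{2n+1}/a₁`) is isomorphic to the
subring of `σ`-invariants of `R`, via the ring homomorphism induced by `a₁ ↦ x₁ + x₂`,
`a₂ ↦ x₁x₂`, `q ↦ q`. -/
theorem stmt_10 (n : ℕ) (hn : 2 ≤ n)
    (δ' : MvPolynomial (Fin 2) ℤ) (hδ' : MvPolynomial.X 0 * δ' = delta (2 * n + 1))
    (IR : Ideal (MvPolynomial (Fin 3) ℤ))
    (hIR : IR = Ideal.span
      {hc (2 * n) (MvPolynomial.X 0 : MvPolynomial (Fin 3) ℤ) (MvPolynomial.X 1),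
        hc n ((MvPolynomial.X 0 : MvPolynomial (Fin 3) ℤ) ^ 2) (MvPolynomial.X 1 ^ 2)
          + MvPolynomial.X 2})
    (IS : Ideal (MvPolynomial (Fin 3) ℤ))
    (hIS : IS = Ideal.span
      {MvPolynomial.rename (Fin.castSucc : Fin 2 → Fin 3) (delta (2 * n)),
        MvPolynomial.rename (Fin.castSucc : Fin 2 → Fin 3) δ' + MvPolynomial.X 2})
    (σ : (MvPolynomial (Fin 3) ℤ ⧸ IR) →+* (MvPolynomial (Fin 3) ℤ ⧸ IR))
    (hσ : ∀ p : MvPolynomial (Fin 3) ℤ,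
      σ (Ideal.Quotient.mk IR p)
        = Ideal.Quotient.mk IR (MvPolynomial.rename (⇑(Equiv.swap (0 : Fin 3) 1)) p)) :
    ∃ e : (MvPolynomial (Fin 3) ℤ ⧸ IS) ≃+*
        (RingHom.eqLocus σ (RingHom.id (MvPolynomial (Fin 3) ℤ ⧸ IR))),
      ∀ p : MvPolynomial (Fin 3) ℤ,
        (↑(e (Ideal.Quotient.mk IS p)) : MvPolynomial (Fin 3) ℤ ⧸ IR)
          = Ideal.Quotient.mk IR
              (MvPolynomial.aeval
                ![MvPolynomial.X 0 + MvPolynomial.X 1,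
                  MvPolynomial.X 0 * MvPolynomial.X 1, MvPolynomial.X 2] p) := by
  have hq : elementarySubst (X 2 : MvPolynomial (Fin 3) ℤ) = X 2 := by simp [elementarySubst]
  have hIR_map : IR = IS.map (elementarySubst : _ →ₐ[ℤ] _).toRingHom := by
    rw [hIR, hIS, Ideal.map_span, Set.image_pair]
    simp [elementarySubst_delta, elementarySubst_of_X_mul_eq_delta hδ', hq]
  subst hIR_map
  have hI : ∀ t, 2 * t ∈ IS → t ∈ IS := fun t ht => by
    rw [hIS] at ht ⊢
    exact mem_span_pair_of_C_mul_mem Int.prime_two (not_C_two_dvd_delta _) ht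
  have hcoords := quadraticCoords_elementarySubst (R := ℤ)
  have hinj := quotientMap_injective_of_quadratic (I := IS) quadraticEquiv.toRingEquiv hcoords
  have hrange := range_quotientMap_eq_eqLocus quadraticEquiv.toRingEquiv hcoords
    quadraticEquiv_rename_swap hI σ hσ
  exact ⟨(RingEquiv.ofBijective (RingHom.rangeRestrict _)
    ⟨fun _ _ h => hinj (congrArg Subtype.val h), RingHom.rangeRestrict_surjective _⟩).trans
      (RingEquiv.subringCongr hrange), fun _ => rfl⟩
end

section
/- Let 2 ≤ m ≤ n be integers and set k := n − m. The map sending a k-strict partition λ = (λ₁ ≥ … ≥ λ_m ≥ 0) with λ₁ ≤ 2n − m to the tuple P = (p₁,…,p_m) defined by p_j = n + k + 1 − λ_j + #{i < j : λ_i + λ_j ≤ 2k + j − i} is a bijection onto the set of index sets, i.e. tuples P = (p₁ < ⋯ < p_m) with p_j ∈ {1,…,2n} and p_i + p_j ≠ 2n + 1 for all i, j; its inverse sends an index set P to the k-strict partition λ with λ_j = n + k + 1 − p_j + #{i < j : p_i + p_j > 2n + 1}. -/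
/-- The set of `k`-strict partitions `λ = (λ₁ ≥ … ≥ λ_m ≥ 0)` with `λ₁ ≤ 2n − m`:
weakly decreasing, nonnegative, with `λ_j > k ⇒ λ_j > λ_{j+1}`. -/
def kStrictSet (m n k : ℕ) (hm : 0 < m) : Set (Fin m → ℤ) :=
  {l | Antitone l ∧ (∀ j, 0 ≤ l j) ∧ l ⟨0, hm⟩ ≤ 2 * (n : ℤ) - m ∧
    ∀ (j : ℕ) (h : j + 1 < m), (k : ℤ) < l ⟨j, by omega⟩ → l ⟨j + 1, h⟩ < l ⟨j, by omega⟩}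

/-- The set of index sets of length `m` for `IG(m,2n)`: tuples `p₁ < ⋯ < p_m` in `{1,…,2n}`
with `p_i + p_j ≠ 2n + 1` for all `i, j`. -/
def indexSet (m n : ℕ) : Set (Fin m → ℤ) :=
  {p | StrictMono p ∧ (∀ j, 1 ≤ p j) ∧ (∀ j, p j ≤ 2 * (n : ℤ)) ∧
    ∀ i j, p i + p j ≠ 2 * (n : ℤ) + 1}

/-- The map `λ ↦ P`, `p_j = n + k + 1 − λ_j + #{i < j : λ_i + λ_j ≤ 2k + j − i}`. -/
def phiMap (m n k : ℕ) (l : Fin m → ℤ) : Fin m → ℤ := fun j =>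
  (n : ℤ) + k + 1 - l j +
    ((Finset.univ.filter fun i : Fin m =>
      i < j ∧ l i + l j ≤ 2 * (k : ℤ) + ((j : ℕ) : ℤ) - ((i : ℕ) : ℤ)).card : ℤ)

/-!
Put `C_j = {i < j : λ_i + λ_j ≤ 2k + j − i}` and `D_j = {i < j : p_i + p_j > 2n + 1}`. Since
`p_j = n + k + 1 − λ_j + #C_j` and the proposed inverse is `λ_j = n + k + 1 − p_j + #D_j`, the two
maps invert each other as soon as `C_j = D_j` for all `j`, whichever of `λ` and `p` one starts from.
Neither this equality nor the correspondence between `k`-strictness and `p_i + p_j ≠ 2n + 1`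
involves the bounds on `λ` and `p`; these match separately, through `n = m + k`.

Both directions rest on the dichotomy `λ_j > k ↔ p_j ≤ n`, with `C_j = D_j = ∅` if `λ_j > k`.
From the side of `λ` this holds because `λ` drops by at least one per step above `k`; from the side
of `p` because the numbers `max (p_i) (2n + 1 − p_i)` are distinct, and those with `i ∈ D_j` lie in
`[n + 1, p_j)`. For `i < j`, those of `D_j ∖ D_i` lie in `[p_i, p_j)`, which makes `λ` weakly
decreasing.
-/

lemma card_le_sub_of_mapsTo_Ico {ι : Type*} {s : Finset ι} {f : ι → ℤ} {a b : ℤ} (hab : a ≤ b)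
    (hf : Set.MapsTo f s (Set.Ico a b)) (hinj : Set.InjOn f s) : (s.card : ℤ) ≤ b - a := by
  rw [← Finset.coe_Ico] at hf
  have hcard := Finset.card_le_card_of_injOn f hf hinj
  rw [Int.card_Ico] at hcard
  omega

/-- The sets `C_j = {i < j : λ_i + λ_j ≤ 2k + j − i}` counted in the definition of `phiMap`. -/
def lowPairs {m : ℕ} (k : ℤ) (l : Fin m → ℤ) (j : Fin m) : Finset (Fin m) :=
  Finset.univ.filter fun i => i < j ∧ l i + l j ≤ 2 * k + ((j : ℕ) : ℤ) - ((i : ℕ) : ℤ)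

/-- The sets `D_j = {i < j : p_i + p_j > 2n + 1}` counted in the definition of `psiMap`. -/
def highPairs {m : ℕ} (n : ℤ) (p : Fin m → ℤ) (j : Fin m) : Finset (Fin m) :=
  Finset.univ.filter fun i => i < j ∧ p i + p j > 2 * n + 1

/-- The map `P ↦ λ`, `λ_j = n + k + 1 − p_j + #{i < j : p_i + p_j > 2n + 1}`, inverse to
`phiMap`. -/
def psiMap {m : ℕ} (n k : ℤ) (p : Fin m → ℤ) (j : Fin m) : ℤ :=
  n + k + 1 - p j + (highPairs n p j).card

/-- `k`-strictness of an integer tuple, with no bound on its entries. Strictness is required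
between any two entries above `k`; for antitone tuples this amounts to the condition on
consecutive entries in `kStrictSet`. -/
structure IsKStrict {m : ℕ} (k : ℤ) (l : Fin m → ℤ) : Prop where
  antitone : Antitone l
  strictAntiOn : StrictAntiOn l {j | k < l j}

/-- The defining conditions of an index set, with no bound on its entries. -/
structure IsIndexTuple {m : ℕ} (n : ℤ) (p : Fin m → ℤ) : Prop where
  strictMono : StrictMono p
  add_ne : ∀ i j, p i + p j ≠ 2 * n + 1

section LowPairs

variable {m : ℕ} {k : ℤ} {l : Fin m → ℤ} {i j : Fin m}

lemma IsKStrict.lt_of_lt (hl : IsKStrict k l) (hij : i < j) (hi : k < l i) : l j < l i := by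
  rcases lt_or_ge k (l j) with hj | hj
  · exact hl.strictAntiOn hi hj hij
  · exact hj.trans_lt hi

lemma mem_lowPairs :
    i ∈ lowPairs k l j ↔ i < j ∧ l i + l j ≤ 2 * k + ((j : ℕ) : ℤ) - ((i : ℕ) : ℤ) := by
  simp [lowPairs]

lemma lowPairs_subset_Iio : lowPairs k l j ⊆ Finset.Iio j :=
  fun _ hx => Finset.mem_Iio.2 (mem_lowPairs.1 hx).1

lemma lowPairs_subset_lowPairs (hl : Antitone l) (hij : i ≤ j) :
    lowPairs k l i ⊆ lowPairs k l j := by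
  intro x hx
  obtain ⟨hxi, hsum⟩ := mem_lowPairs.1 hx
  have hlij := hl hij
  exact mem_lowPairs.2 ⟨hxi.trans_le hij, by omega⟩

lemma IsKStrict.add_sub_le (hl : IsKStrict k l) (hij : i ≤ j) (hj : k < l j) :
    l j + (((j : ℕ) : ℤ) - ((i : ℕ) : ℤ)) ≤ l i := by
  have habove : ∀ x ≤ j, k < l x := fun x hx => hj.trans_le (hl.antitone hx)
  have hcard : ((Finset.Ioc i j).card : ℤ) ≤ l i - l j := by
    refine card_le_sub_of_mapsTo_Ico (hl.antitone hij) (fun x hx => ?_)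
      (hl.strictAntiOn.injOn.mono fun x hx => habove x (Finset.mem_Ioc.1 hx).2)
    obtain ⟨hix, hxj⟩ := Finset.mem_Ioc.1 hx
    exact ⟨hl.antitone hxj, hl.lt_of_lt hix (habove i hij)⟩
  rw [Fin.card_Ioc] at hcard
  omega

lemma IsKStrict.lowPairs_eq_empty (hl : IsKStrict k l) (hj : k < l j) : lowPairs k l j = ∅ := by
  refine Finset.eq_empty_of_forall_notMem fun x hx => ?_
  obtain ⟨hxj, hsum⟩ := mem_lowPairs.1 hx
  have hdrop := hl.add_sub_le hxj.le hj
  omega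

lemma IsKStrict.Ico_subset_lowPairs (hl : IsKStrict k l) (hi : i ∈ lowPairs k l j) :
    Finset.Ico i j ⊆ lowPairs k l j := by
  intro x hx
  obtain ⟨hix, hxj⟩ := Finset.mem_Ico.1 hx
  have hsum := (mem_lowPairs.1 hi).2
  refine mem_lowPairs.2 ⟨hxj, ?_⟩
  rcases lt_or_ge k (l x) with hlx | hlx
  · have hdrop := hl.add_sub_le hix hlx
    omega
  · have hlj := hl.antitone hxj.le
    omega

lemma IsKStrict.lowPairs_subset_Ioo (hl : IsKStrict k l) (hij : i < j)
    (hi : i ∉ lowPairs k l j) : lowPairs k l j ⊆ Finset.Ioo i j := by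
  intro x hx
  refine Finset.mem_Ioo.2 ⟨lt_of_not_ge fun hxi => hi ?_, (mem_lowPairs.1 hx).1⟩
  exact hl.Ico_subset_lowPairs hx (Finset.mem_Ico.2 ⟨hxi, hij⟩)

lemma IsKStrict.lowPairs_eq_empty_of_notMem (hl : IsKStrict k l) (hij : i < j)
    (hi : i ∉ lowPairs k l j) : lowPairs k l i = ∅ := by
  refine Finset.eq_empty_of_forall_notMem fun x hx => ?_
  have hxj := lowPairs_subset_lowPairs hl.antitone hij.le hx
  have hix := (Finset.mem_Ioo.1 (hl.lowPairs_subset_Ioo hij hi hxj)).1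
  exact hix.not_gt (mem_lowPairs.1 hx).1

end LowPairs

section PhiMap

variable {m n k : ℕ} {l : Fin m → ℤ} {i j : Fin m}

lemma phiMap_apply (n : ℕ) (l : Fin m → ℤ) (j : Fin m) :
    phiMap m n k l j = n + k + 1 - l j + (lowPairs k l j).card :=
  rfl

lemma IsKStrict.phiMap_of_lt (hl : IsKStrict k l) (hj : k < l j) :
    phiMap m n k l j = n + k + 1 - l j := by
  simp [phiMap_apply, hl.lowPairs_eq_empty hj]

lemma IsKStrict.strictMono_phiMap (hl : IsKStrict k l) : StrictMono (phiMap m n k l) := by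
  intro i j hij
  rcases lt_or_ge (k : ℤ) (l j) with hj | hj
  · have hi : k < l i := hj.trans_le (hl.antitone hij.le)
    have hlij : l j < l i := hl.lt_of_lt hij hi
    rw [hl.phiMap_of_lt hi, hl.phiMap_of_lt hj]
    omega
  rcases lt_or_ge (k : ℤ) (l i) with hi | hi
  · rw [hl.phiMap_of_lt hi, phiMap_apply]
    omega
  · have hmem : i ∈ lowPairs k l j := mem_lowPairs.2 ⟨hij, by omega⟩
    have hcard : (lowPairs k l i).card < (lowPairs k l j).card :=
      Finset.card_lt_card <| (Finset.ssubset_iff_of_subset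
        (lowPairs_subset_lowPairs hl.antitone hij.le)).2
          ⟨i, hmem, fun h => lt_irrefl i (mem_lowPairs.1 h).1⟩
    have hlij := hl.antitone hij.le
    rw [phiMap_apply, phiMap_apply]
    omega

lemma IsKStrict.lt_phiMap_add_of_mem (hl : IsKStrict k l) (hi : i ∈ lowPairs k l j) :
    2 * n + 1 < phiMap m n k l i + phiMap m n k l j := by
  have hcard := Finset.card_le_card (hl.Ico_subset_lowPairs hi)
  have hsum := (mem_lowPairs.1 hi).2
  rw [Fin.card_Ico] at hcard
  rw [phiMap_apply, phiMap_apply]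
  omega

lemma IsKStrict.phiMap_add_lt_of_notMem (hl : IsKStrict k l) (hij : i < j)
    (hi : i ∉ lowPairs k l j) : phiMap m n k l i + phiMap m n k l j < 2 * n + 1 := by
  have hcard := Finset.card_le_card (hl.lowPairs_subset_Ioo hij hi)
  rw [Fin.card_Ioo] at hcard
  rw [phiMap_apply, phiMap_apply, hl.lowPairs_eq_empty_of_notMem hij hi, Finset.card_empty]
  rw [mem_lowPairs, not_and, not_le] at hi
  have hsum := hi hij
  omega

lemma IsKStrict.isIndexTuple_phiMap (hl : IsKStrict k l) :
    IsIndexTuple n (phiMap m n k l) := by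
  refine ⟨hl.strictMono_phiMap, fun i j => ?_⟩
  wlog hij : i ≤ j generalizing i j
  · rw [add_comm]
    exact this j i (le_of_not_ge hij)
  rcases hij.eq_or_lt with rfl | hij
  · omega
  · by_cases hi : i ∈ lowPairs k l j
    · exact (hl.lt_phiMap_add_of_mem hi).ne'
    · exact (hl.phiMap_add_lt_of_notMem hij hi).ne

end PhiMap

section HighPairs

variable {m : ℕ} {n k : ℤ} {p : Fin m → ℤ} {i j : Fin m}

lemma mem_highPairs : i ∈ highPairs n p j ↔ i < j ∧ p i + p j > 2 * n + 1 := by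
  simp [highPairs]

lemma highPairs_eq_empty (hp : StrictMono p) (hj : p j ≤ n) : highPairs n p j = ∅ := by
  refine Finset.eq_empty_of_forall_notMem fun x hx => ?_
  obtain ⟨hxj, hsum⟩ := mem_highPairs.1 hx
  have hpxj := hp hxj
  omega

lemma IsIndexTuple.add_lt_of_notMem (hp : IsIndexTuple n p) (hij : i < j)
    (hi : i ∉ highPairs n p j) : p i + p j < 2 * n + 1 :=
  lt_of_le_of_ne (not_lt.1 fun h => hi (mem_highPairs.2 ⟨hij, h⟩)) (hp.add_ne i j)

lemma IsIndexTuple.injective_max_reflect (hp : IsIndexTuple n p) :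
    Function.Injective fun i => max (p i) (2 * n + 1 - p i) := by
  intro i j hij
  have hne := hp.add_ne i j
  dsimp only at hij
  exact hp.strictMono.injective (by omega)

lemma IsIndexTuple.card_highPairs_le (hp : IsIndexTuple n p) (hj : n < p j) :
    ((highPairs n p j).card : ℤ) ≤ p j - (n + 1) := by
  refine card_le_sub_of_mapsTo_Ico (by omega) (fun x hx => ?_) hp.injective_max_reflect.injOn
  obtain ⟨hxj, hsum⟩ := mem_highPairs.1 hx
  have hpxj := hp.strictMono hxj
  exact ⟨by omega, by omega⟩

lemma IsIndexTuple.card_highPairs_sdiff_le (hp : IsIndexTuple n p) (hij : i ≤ j) :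
    ((highPairs n p j \ highPairs n p i).card : ℤ) ≤ p j - p i := by
  refine card_le_sub_of_mapsTo_Ico (hp.strictMono.monotone hij) (fun x hx => ?_)
    hp.injective_max_reflect.injOn
  obtain ⟨hxj, hxi⟩ := Finset.mem_sdiff.1 hx
  obtain ⟨hxj, hsum⟩ := mem_highPairs.1 hxj
  have hpxj := hp.strictMono hxj
  rcases lt_or_ge x i with hlt | hge
  · have hlow := hp.add_lt_of_notMem hlt hxi
    exact ⟨by omega, by omega⟩
  · have hpix := hp.strictMono.monotone hge
    exact ⟨by omega, by omega⟩

lemma psiMap_of_le (hp : StrictMono p) (hj : p j ≤ n) : psiMap n k p j = n + k + 1 - p j := by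
  simp [psiMap, highPairs_eq_empty hp hj]

lemma IsIndexTuple.lt_psiMap_iff (hp : IsIndexTuple n p) : k < psiMap n k p j ↔ p j ≤ n := by
  rcases le_or_gt (p j) n with hj | hj
  · rw [psiMap_of_le hp.strictMono hj]
    omega
  · have hcard := hp.card_highPairs_le hj
    rw [psiMap]
    omega

lemma IsIndexTuple.isKStrict_psiMap (hp : IsIndexTuple n p) : IsKStrict k (psiMap n k p) := by
  refine ⟨fun i j hij => ?_, fun i hi j hj hij => ?_⟩
  · have hsdiff := hp.card_highPairs_sdiff_le hij
    have hcard := Finset.card_le_card_sdiff_add_card (s := highPairs n p j) (t := highPairs n p i)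
    rw [psiMap, psiMap]
    omega
  · have hpij := hp.strictMono hij
    rw [psiMap_of_le hp.strictMono (hp.lt_psiMap_iff.1 hi),
      psiMap_of_le hp.strictMono (hp.lt_psiMap_iff.1 hj)]
    omega

lemma IsIndexTuple.mem_lowPairs_psiMap_of_mem (hp : IsIndexTuple n p)
    (hi : i ∈ highPairs n p j) : i ∈ lowPairs k (psiMap n k p) j := by
  obtain ⟨hij, hsum⟩ := mem_highPairs.1 hi
  refine mem_lowPairs.2 ⟨hij, ?_⟩
  rcases lt_or_ge n (p i) with hni | hni
  · have hcardi := hp.card_highPairs_le hni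
    have hcardj := hp.card_highPairs_le (hni.trans (hp.strictMono hij))
    rw [psiMap, psiMap]
    omega
  · have hbelow : ((highPairs n p j \ Finset.Ico i j).card : ℤ) ≤ p i - (2 * n + 2 - p j) := by
      refine card_le_sub_of_mapsTo_Ico (by omega) (fun x hx => ?_) hp.strictMono.injective.injOn
      obtain ⟨hxj, hxi⟩ := Finset.mem_sdiff.1 hx
      obtain ⟨hxj, hsumx⟩ := mem_highPairs.1 hxj
      have hlt : x < i := lt_of_not_ge fun hix => hxi (Finset.mem_Ico.2 ⟨hix, hxj⟩)
      exact ⟨by omega, hp.strictMono hlt⟩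
    have hcard := Finset.card_le_card_sdiff_add_card (s := highPairs n p j) (t := Finset.Ico i j)
    rw [Fin.card_Ico] at hcard
    rw [psiMap_of_le hp.strictMono hni, psiMap]
    omega

lemma IsIndexTuple.card_Ioo_sdiff_highPairs_le (hp : IsIndexTuple n p) (hij : i < j)
    (hi : i ∉ highPairs n p j) :
    ((Finset.Ioo i j \ highPairs n p j).card : ℤ) ≤ 2 * n + 1 - p j - (p i + 1) := by
  have hsum := hp.add_lt_of_notMem hij hi
  refine card_le_sub_of_mapsTo_Ico (by omega) (fun x hx => ?_) hp.strictMono.injective.injOn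
  obtain ⟨hx, hxj⟩ := Finset.mem_sdiff.1 hx
  obtain ⟨hix, hlt⟩ := Finset.mem_Ioo.1 hx
  have hpix := hp.strictMono hix
  have hsumx := hp.add_lt_of_notMem hlt hxj
  exact ⟨by omega, by omega⟩

lemma IsIndexTuple.lowPairs_psiMap (hp : IsIndexTuple n p) (j : Fin m) :
    lowPairs k (psiMap n k p) j = highPairs n p j := by
  ext i
  refine ⟨fun hlow => ?_, hp.mem_lowPairs_psiMap_of_mem⟩
  by_contra hi
  obtain ⟨hij, hle⟩ := mem_lowPairs.1 hlow
  have hsum := hp.add_lt_of_notMem hij hi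
  have hpij := hp.strictMono hij
  have hgap := hp.card_Ioo_sdiff_highPairs_le hij hi
  have hcard := Finset.le_card_sdiff (highPairs n p j) (Finset.Ioo i j)
  rw [Fin.card_Ioo] at hcard
  rw [psiMap_of_le hp.strictMono (by omega), psiMap] at hle
  omega

end HighPairs

section Inverse

variable {m n k : ℕ} {l p : Fin m → ℤ}

lemma IsKStrict.highPairs_phiMap (hl : IsKStrict k l) (j : Fin m) :
    highPairs n (phiMap m n k l) j = lowPairs k l j := by
  ext i
  refine ⟨fun hhigh => ?_, fun hi => ?_⟩
  · obtain ⟨hij, hgt⟩ := mem_highPairs.1 hhigh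
    by_contra hi
    exact hgt.not_gt (hl.phiMap_add_lt_of_notMem hij hi)
  · exact mem_highPairs.2 ⟨(mem_lowPairs.1 hi).1, hl.lt_phiMap_add_of_mem hi⟩

theorem invOn_psiMap_phiMap (m n k : ℕ) :
    Set.InvOn (psiMap n k) (phiMap m n k) {l | IsKStrict k l} {p | IsIndexTuple n p} := by
  refine ⟨fun l hl => funext fun j => ?_, fun p hp => funext fun j => ?_⟩
  · rw [psiMap, IsKStrict.highPairs_phiMap hl, phiMap_apply]
    ring
  · rw [phiMap_apply, IsIndexTuple.lowPairs_psiMap hp, psiMap]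
    ring

lemma isKStrict_of_mem_kStrictSet {hm : 0 < m} (hl : l ∈ kStrictSet m n k hm) :
    IsKStrict k l := by
  obtain ⟨hanti, -, -, hstrict⟩ := hl
  refine ⟨hanti, fun i hi j _ hij => ?_⟩
  have hsucc : (i : ℕ) + 1 < m := (Nat.succ_le_of_lt hij).trans_lt j.isLt
  have hle : l j ≤ l ⟨i + 1, hsucc⟩ := hanti (Nat.succ_le_of_lt hij)
  exact hle.trans_lt (hstrict i hsucc hi)

lemma isIndexTuple_of_mem_indexSet (hp : p ∈ indexSet m n) : IsIndexTuple n p :=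
  ⟨hp.1, hp.2.2.2⟩

lemma mapsTo_phiMap (hm : 0 < m) (hn : n = m + k) :
    Set.MapsTo (phiMap m n k) (kStrictSet m n k hm) (indexSet m n) := by
  intro l hl
  have hphi : IsIndexTuple n (phiMap m n k l) :=
    (isKStrict_of_mem_kStrictSet hl).isIndexTuple_phiMap
  obtain ⟨hanti, hnonneg, hfirst, -⟩ := hl
  refine ⟨hphi.strictMono, fun j => ?_, fun j => ?_, hphi.add_ne⟩
  · have hlj : l j ≤ l ⟨0, hm⟩ := hanti (Nat.zero_le j)
    rw [phiMap_apply]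
    omega
  · have hcard := Finset.card_le_card (lowPairs_subset_Iio (k := k) (l := l) (j := j))
    have hlj := hnonneg j
    rw [Fin.card_Iio] at hcard
    rw [phiMap_apply]
    omega

lemma psiMap_nonneg (hn : n = m + k) (hp : p ∈ indexSet m n) (j : Fin m) :
    0 ≤ psiMap n k p j := by
  have hindex : IsIndexTuple n p := isIndexTuple_of_mem_indexSet hp
  obtain ⟨hmono, hpos, hle, -⟩ := hp
  let last : Fin m := ⟨m - 1, Nat.sub_one_lt_of_lt j.pos⟩
  have hlast : (last : ℕ) + 1 = m := Nat.sub_add_cancel j.pos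
  have hjlast : j ≤ last := Nat.le_sub_one_of_lt j.isLt
  refine le_trans ?_ (hindex.isKStrict_psiMap.antitone hjlast)
  have hple := hle last
  have hlow : ((Finset.Iio last \ highPairs n p last).card : ℤ) ≤ 2 * n + 1 - p last - 1 := by
    refine card_le_sub_of_mapsTo_Ico (by omega) (fun x hx => ?_) hmono.injective.injOn
    obtain ⟨hx, hxlast⟩ := Finset.mem_sdiff.1 hx
    have hsum := hindex.add_lt_of_notMem (Finset.mem_Iio.1 hx) hxlast
    exact ⟨hpos x, by omega⟩
  have hcard := Finset.le_card_sdiff (highPairs n p last) (Finset.Iio last)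
  rw [Fin.card_Iio] at hcard
  rw [psiMap]
  omega

lemma mapsTo_psiMap (hm : 0 < m) (hn : n = m + k) :
    Set.MapsTo (psiMap n k) (indexSet m n) (kStrictSet m n k hm) := by
  intro p hp
  have hpsi : IsKStrict k (psiMap n k p) :=
    (isIndexTuple_of_mem_indexSet hp).isKStrict_psiMap
  refine ⟨hpsi.antitone, psiMap_nonneg hn hp, ?_, fun j hj => hpsi.lt_of_lt (Nat.lt_succ_self j)⟩
  have hempty : highPairs n p ⟨0, hm⟩ = ∅ :=
    Finset.eq_empty_of_forall_notMem fun x hx => Nat.not_lt_zero x (mem_highPairs.1 hx).1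
  have hpos := hp.2.1 ⟨0, hm⟩
  rw [psiMap, hempty, Finset.card_empty]
  omega

end Inverse

/-- For `2 ≤ m ≤ n` and `k = n − m`, the map `λ ↦ P` with
`p_j = n + k + 1 − λ_j + #{i < j : λ_i + λ_j ≤ 2k + j − i}` is a bijection from `k`-strict
partitions `(λ₁ ≥ … ≥ λ_m ≥ 0)` with `λ₁ ≤ 2n − m` onto index sets, with inverse given by
`λ_j = n + k + 1 − p_j + #{i < j : p_i + p_j > 2n + 1}`. -/
theorem stmt_14 (m n k : ℕ) (hm : 2 ≤ m) (hmn : m ≤ n) (hk : k = n - m) :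
    Set.BijOn (phiMap m n k) (kStrictSet m n k (by omega)) (indexSet m n) ∧
    ∀ l ∈ kStrictSet m n k (by omega : 0 < m), ∀ j : Fin m,
      l j = (n : ℤ) + k + 1 - phiMap m n k l j +
        ((Finset.univ.filter fun i : Fin m =>
          i < j ∧ phiMap m n k l i + phiMap m n k l j > 2 * (n : ℤ) + 1).card : ℤ) := by
  have hn : n = m + k := by omega
  have hm₀ : 0 < m := by omega
  have hinv : Set.InvOn (psiMap n k) (phiMap m n k) (kStrictSet m n k hm₀) (indexSet m n) :=
    (invOn_psiMap_phiMap m n k).mono (fun _ => isKStrict_of_mem_kStrictSet)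
      fun _ => isIndexTuple_of_mem_indexSet
  exact ⟨hinv.bijOn (mapsTo_phiMap hm₀ hn) (mapsTo_psiMap hm₀ hn),
    fun l hl j => (congrFun (hinv.1 hl) j).symm⟩
end
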